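/- Let k ≥ 1 be an integer and let K_k denote the Gaussian curvature of the conformal metric h_k(z)|dz|² on ℂ∖{0}, where h_k(z) = k²·|z|^{2(k−1)}·(1 + |z|^{2k}·u(|z|^{2k})²). Then K_k(z) → −4 as z → 0 with z ∈ ℂ∖{0}. -/

import Mathlib

open Complex Filter Topology Metric
open scoped ComplexOrder

/-- The function `u(t) = (t-1)/(t log t)` for `t ≠ 1`, extended by `u(1) = 1`. -/
noncomputable def u (t : ℝ) : ℝ := if t = 1 then 1 else (t - 1) / (t * Real.log t)

/-- Wirtinger derivative `∂g` of a complex-valued function on `ℂ` (real-differentiable sense). -/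
noncomputable def wdz (g : ℂ → ℂ) (z : ℂ) : ℂ :=
  (fderiv ℝ g z 1 - Complex.I * fderiv ℝ g z Complex.I) / 2

/-- Wirtinger derivative `∂̄g` of a complex-valued function on `ℂ`. -/
noncomputable def wdzbar (g : ℂ → ℂ) (z : ℂ) : ℂ :=
  (fderiv ℝ g z 1 + Complex.I * fderiv ℝ g z Complex.I) / 2

/-- `∂h` for a real-valued `h`. -/
noncomputable def wdzR (h : ℂ → ℝ) : ℂ → ℂ := wdz fun w => (h w : ℂ)

/-- `∂̄h` for a real-valued `h`. -/
noncomputable def wdzbarR (h : ℂ → ℝ) : ℂ → ℂ := wdzbar fun w => (h w : ℂ)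

/-- `∂∂̄h` for a real-valued `h`. -/
noncomputable def wlapR (h : ℂ → ℝ) : ℂ → ℂ := wdz (wdzbarR h)

/-- The numerator `h·∂∂̄h − ∂h·∂̄h` of (−1/2 times) the Gaussian curvature of `h|dz|²`. -/
noncomputable def curvNum (h : ℂ → ℝ) (z : ℂ) : ℂ :=
  (h z : ℂ) * wlapR h z - wdzR h z * wdzbarR h z

/-- The Gaussian curvature `K = −2(h·∂∂̄h − ∂h·∂̄h)/h³` of the conformal metric `h|dz|²`. -/
noncomputable def gaussCurv (h : ℂ → ℝ) (z : ℂ) : ℂ :=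
  -2 * curvNum h z / (h z : ℂ) ^ 3


def HasW (g : ℂ → ℂ) (p q : ℂ) (z : ℂ) : Prop :=
  HasFDerivAt (𝕜 := ℝ) g (p • (ContinuousLinearMap.id ℝ ℂ) + q • (conjCLE : ℂ →L[ℝ] ℂ)) z

lemma HasW.wdz {g : ℂ → ℂ} {p q z : ℂ} (h : HasW g p q z) : wdz g z = p := by
  unfold _root_.wdz
  rw [HasFDerivAt.fderiv h]
  simp
  linear_combination (q / 2 - p / 2) * Complex.I_mul_I

lemma HasW.wdzbar {g : ℂ → ℂ} {p q z : ℂ} (h : HasW g p q z) : wdzbar g z = q := by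
  unfold _root_.wdzbar
  rw [HasFDerivAt.fderiv h]
  simp
  linear_combination (-q / 2 + p / 2) * Complex.I_mul_I

lemma HasW.mul {g f : ℂ → ℂ} {p q a b z : ℂ} (h : HasW g p q z) (h' : HasW f a b z) :
    HasW (fun w => g w * f w) (g z * a + f z * p) (g z * b + f z * q) z := by
  unfold HasW at *
  refine (HasFDerivAt.mul h h').congr_fderiv ?_
  ext v
  simp
  ring

lemma hasW_inv_conj {z : ℂ} (hz : z ≠ 0) :
    HasW (fun w => ((starRingEnd ℂ) w)⁻¹) 0 (-1 / ((starRingEnd ℂ) z) ^ 2) z := by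
  unfold HasW
  have hz' : (starRingEnd ℂ) z ≠ 0 := by simpa using hz
  have h1 : HasFDerivAt (𝕜 := ℝ) (fun w : ℂ => (starRingEnd ℂ) w) (conjCLE : ℂ →L[ℝ] ℂ) z :=
    (conjCLE : ℂ →L[ℝ] ℂ).hasFDerivAt
  have h2 := ((hasDerivAt_inv hz').hasFDerivAt.restrictScalars ℝ).comp z h1
  refine h2.congr_fderiv ?_
  ext v
  simp
  ring

lemma hasW_radial {A : ℝ → ℝ} {a : ℝ} {z : ℂ} (hz : z ≠ 0)
    (hA : HasDerivAt A a (Real.log (‖z‖ ^ 2))) :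
    HasW (fun w => ((A (Real.log (‖w‖ ^ 2)) : ℝ) : ℂ)) (a / z) (a / (starRingEnd ℂ) z) z := by
  unfold HasW
  have hn : ‖z‖ ^ 2 ≠ 0 := by simpa using hz
  have h1 := (hasStrictFDerivAt_norm_sq (F := ℂ) z).hasFDerivAt
  have h2 := (hA.comp _ (Real.hasDerivAt_log hn)).comp_hasFDerivAt z h1
  have h3 := (ofRealCLM.hasFDerivAt).comp z h2
  refine h3.congr_fderiv ?_
  have hz' : (starRingEnd ℂ) z ≠ 0 := by simpa using hz
  have hs : ((‖z‖ : ℂ)) ^ 2 = z * (starRingEnd ℂ) z := by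
    rw [Complex.mul_conj, Complex.normSq_eq_norm_sq]; push_cast; rfl
  have hi : ∀ v : ℂ, 2 * ((inner ℝ z v : ℝ) : ℂ) = (starRingEnd ℂ) z * v + z * (starRingEnd ℂ) v := by
    intro v
    apply Complex.ext <;> simp [Complex.inner] <;> ring
  ext v
  have := hi v
  simp [Complex.inner] at this
  simp
  rw [hs]
  field_simp
  linear_combination (a : ℂ) * this

lemma gauss_radial {h : ℂ → ℝ} {φ φ1 φ2 : ℝ → ℝ}
    (hh : ∀ w : ℂ, w ≠ 0 → ‖w‖ < 1 → h w = φ (Real.log (‖w‖ ^ 2)))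
    (h1 : ∀ x < 0, HasDerivAt φ (φ1 x) x) (h2 : ∀ x < 0, HasDerivAt φ1 (φ2 x) x)
    {z : ℂ} (hz : z ≠ 0) (hz1 : ‖z‖ < 1) :
    gaussCurv h z = ((-2 * (φ (Real.log (‖z‖ ^ 2)) * φ2 (Real.log (‖z‖ ^ 2))
      - φ1 (Real.log (‖z‖ ^ 2)) ^ 2) / (‖z‖ ^ 2 * φ (Real.log (‖z‖ ^ 2)) ^ 3) : ℝ) : ℂ) := by
  have hneg : ∀ w : ℂ, w ≠ 0 → ‖w‖ < 1 → Real.log (‖w‖ ^ 2) < 0 := by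
    intro w hw hw1
    have : 0 < ‖w‖ := norm_pos_iff.mpr hw
    exact Real.log_neg (by positivity) (by nlinarith)
  have hev : ∀ w : ℂ, w ≠ 0 → ‖w‖ < 1 → ∀ᶠ y in 𝓝 w, y ≠ 0 ∧ ‖y‖ < 1 := by
    intro w hw hw1
    exact (isOpen_ne.eventually_mem hw).and
      ((isOpen_lt continuous_norm continuous_const).eventually_mem hw1)
  have hW : ∀ w : ℂ, w ≠ 0 → ‖w‖ < 1 → HasW (fun y => (h y : ℂ))
      (φ1 (Real.log (‖w‖ ^ 2)) / w) (φ1 (Real.log (‖w‖ ^ 2)) / (starRingEnd ℂ) w) w := by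
    intro w hw hw1
    refine HasFDerivAt.congr_of_eventuallyEq (hasW_radial hw (h1 _ (hneg w hw hw1))) ?_
    filter_upwards [hev w hw hw1] with y hy
    rw [hh y hy.1 hy.2]
  have hM := (hasW_radial hz (h2 _ (hneg z hz hz1))).mul (hasW_inv_conj hz)
  have hEq : wdzbarR h =ᶠ[𝓝 z]
      fun w => ((φ1 (Real.log (‖w‖ ^ 2)) : ℝ) : ℂ) * ((starRingEnd ℂ) w)⁻¹ := by
    filter_upwards [hev z hz hz1] with y hy
    unfold wdzbarR
    rw [(hW y hy.1 hy.2).wdzbar, div_eq_mul_inv]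
  have hz' : (starRingEnd ℂ) z ≠ 0 := by simpa using hz
  have hs : ((‖z‖ : ℂ)) ^ 2 = z * (starRingEnd ℂ) z := by
    rw [Complex.mul_conj, Complex.normSq_eq_norm_sq]; push_cast; rfl
  unfold gaussCurv curvNum wlapR
  rw [HasW.wdz (HasFDerivAt.congr_of_eventuallyEq hM hEq)]
  unfold wdzR wdzbarR
  rw [(hW z hz hz1).wdz, (hW z hz hz1).wdzbar, hh z hz hz1]
  push_cast
  rw [hs]
  rcases eq_or_ne (φ (Real.log (‖z‖ ^ 2)) : ℂ) 0 with h0 | h0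
  · rw [h0]; simp
  · field_simp
    ring

noncomputable def PP (y : ℝ) : ℝ := y ^ 2 * Real.exp y + (1 - Real.exp y) ^ 2
noncomputable def PP1 (y : ℝ) : ℝ :=
  2 * y * Real.exp y + y ^ 2 * Real.exp y - 2 * (1 - Real.exp y) * Real.exp y
noncomputable def PP2 (y : ℝ) : ℝ := Real.exp y * (4 * y + y ^ 2 + 4 * Real.exp y)

lemma PP_deriv (y : ℝ) : HasDerivAt PP (PP1 y) y := by
  have h := (((hasDerivAt_id y).pow 2).mul (Real.hasDerivAt_exp y)).add
    (((hasDerivAt_const y (1:ℝ)).sub (Real.hasDerivAt_exp y)).pow 2)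
  refine h.congr_deriv ?_
  simp [PP1]
  ring

lemma PP1_deriv (y : ℝ) : HasDerivAt PP1 (PP2 y) y := by
  have e := Real.hasDerivAt_exp y
  have h := ((((hasDerivAt_id y).const_mul 2).mul e).add (((hasDerivAt_id y).pow 2).mul e)).sub
    ((((hasDerivAt_const y (1:ℝ)).sub e).const_mul 2).mul e)
  refine h.congr_deriv ?_
  simp [PP2]
  ring

lemma PP_pos {y : ℝ} (hy : y ≠ 0) : 0 < PP y := by
  unfold PP
  have := Real.exp_pos y
  positivity

lemma exp_lim (n : ℕ) : Tendsto (fun y : ℝ => y ^ n * Real.exp y) atBot (𝓝 0) := by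
  have h := ((Real.tendsto_pow_mul_exp_neg_atTop_nhds_zero n).comp tendsto_neg_atBot_atTop).const_mul
    ((-1 : ℝ) ^ n)
  rw [mul_zero] at h
  refine h.congr fun y => ?_
  simp only [Function.comp, neg_neg]
  rw [← mul_assoc, ← mul_pow]
  simp

lemma R_lim : Tendsto (fun y : ℝ =>
    -2 * (y ^ 2 * (PP y * PP2 y - PP1 y ^ 2) / PP y ^ 3 + 2 / PP y)) atBot (𝓝 (-4)) := by
  have a0 := exp_lim 0
  have a1 := exp_lim 1
  have a2 := exp_lim 2
  have a3 := exp_lim 3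
  have a4 := exp_lim 4
  have hP : Tendsto PP atBot (𝓝 1) := by
    have := a2.add ((a0.const_sub 1).pow 2)
    norm_num at this
    exact this
  have hA : Tendsto (fun y => y ^ 2 * PP2 y) atBot (𝓝 0) := by
    have := ((a3.const_mul 4).add a4).add ((a1.pow 2).const_mul 4)
    norm_num at this
    refine this.congr fun y => ?_
    unfold PP2; ring
  have hB : Tendsto (fun y => y * PP1 y) atBot (𝓝 0) := by
    have := ((a2.const_mul 2).add a3).sub (((a0.const_sub 1).mul a1).const_mul 2)
    norm_num at this
    refine this.congr fun y => ?_
    unfold PP1; ring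
  have := ((((hP.mul hA).sub (hB.pow 2)).div (hP.pow 3) (by norm_num)).add
    ((tendsto_const_nhds (x := (2:ℝ))).div hP (by norm_num))).const_mul (-2)
  rw [show (-2 : ℝ) * ((1 * 0 - 0 ^ 2) / 1 ^ 3 + 2 / 1) = -4 by norm_num] at this
  refine this.congr fun y => ?_
  simp only [Pi.div_apply]
  ring

/-- the Gaussian curvature of `h_k|dz|²` on `ℂ∖{0}` tends to `−4`
as `z → 0`. -/
theorem stmt10 (k : ℕ) (hk : 1 ≤ k) :
    Tendsto (gaussCurv (fun w =>
        (k : ℝ) ^ 2 * ‖w‖ ^ (2 * (k - 1)) *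
          (1 + ‖w‖ ^ (2 * k) * u (‖w‖ ^ (2 * k)) ^ 2)))
      (𝓝[≠] (0 : ℂ)) (𝓝 (-4)) := by
  have hk0 : (0 : ℝ) < k := by exact_mod_cast hk
  have hlog : Tendsto (fun z : ℂ => (k : ℝ) * Real.log (‖z‖ ^ 2)) (𝓝[≠] (0 : ℂ)) atBot := by
    refine Tendsto.const_mul_atBot hk0 ?_
    have h1 : Tendsto (fun z : ℂ => ‖z‖ ^ 2) (𝓝[≠] (0 : ℂ)) (𝓝[≠] (0 : ℝ)) := by
      refine tendsto_nhdsWithin_iff.mpr ⟨?_, ?_⟩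
      · have : Continuous (fun z : ℂ => ‖z‖ ^ 2) := by fun_prop
        have := this.tendsto 0
        simp at this
        exact this.mono_left nhdsWithin_le_nhds
      · filter_upwards [self_mem_nhdsWithin] with z hz
        simpa using hz
    exact Real.tendsto_log_nhdsNE_zero.comp h1
  have hmain := (Complex.continuous_ofReal.tendsto (-4)).comp (R_lim.comp hlog)
  have h4 : (((-4 : ℝ)) : ℂ) = -4 := by norm_num
  rw [h4] at hmain
  refine hmain.congr' ?_
  have hball : ∀ᶠ z in 𝓝[≠] (0 : ℂ), ‖z‖ < 1 := by
    refine nhdsWithin_le_nhds ?_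
    exact (isOpen_lt continuous_norm continuous_const).eventually_mem (by simp)
  filter_upwards [self_mem_nhdsWithin, hball] with z hz hz1
  have hz : z ≠ 0 := hz
  symm
  have hE : ∀ x : ℝ, HasDerivAt (fun x : ℝ => Real.exp (-x)) (- Real.exp (-x)) x := by
    intro x
    simpa using (hasDerivAt_neg x).exp
  have hk' : ∀ x : ℝ, HasDerivAt (fun x : ℝ => (k : ℝ) * x) k x := by
    intro x
    simpa using (hasDerivAt_id x).const_mul (k : ℝ)
  have hP : ∀ x : ℝ, HasDerivAt (fun x : ℝ => PP (k * x)) (PP1 (k * x) * k) x := fun x =>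
    (PP_deriv (k * x)).comp x (hk' x)
  have hP1 : ∀ x : ℝ, HasDerivAt (fun x : ℝ => PP1 (k * x)) (PP2 (k * x) * k) x := fun x =>
    (PP1_deriv (k * x)).comp x (hk' x)
  have hx : ∀ (n : ℕ) (x : ℝ), HasDerivAt (fun x : ℝ => x ^ n) (n * x ^ (n - 1)) x := fun n x =>
    hasDerivAt_pow n x
  rw [gauss_radial (φ := fun x => Real.exp (-x) * (PP (k * x) / x ^ 2))
    (φ1 := fun x => Real.exp (-x) * ((k * PP1 (k * x) - PP (k * x)) / x ^ 2 - 2 * PP (k * x) / x ^ 3))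
    (φ2 := fun x => Real.exp (-x) * ((k ^ 2 * PP2 (k * x) - 2 * k * PP1 (k * x) + PP (k * x)) / x ^ 2
      - 4 * (k * PP1 (k * x) - PP (k * x)) / x ^ 3 + 6 * PP (k * x) / x ^ 4)) ?_ ?_ ?_ hz hz1]
  · simp only [Function.comp]
    congr 1
    have hs : 0 < ‖z‖ ^ 2 := by
      have : 0 < ‖z‖ := norm_pos_iff.mpr hz
      positivity
    have hx0 : Real.log (‖z‖ ^ 2) ≠ 0 := by
      refine (Real.log_neg hs ?_).ne
      have : 0 < ‖z‖ := norm_pos_iff.mpr hz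
      nlinarith
    rw [Real.exp_neg, Real.exp_log hs]
    generalize Real.log (‖z‖ ^ 2) = x at *
    generalize ‖z‖ ^ 2 = s at *
    have hPp := (PP_pos (mul_ne_zero hk0.ne' hx0)).ne'
    generalize PP (k * x) = p at *
    generalize PP1 (k * x) = p1 at *
    generalize PP2 (k * x) = p2 at *
    field_simp
    ring
  · intro w hw hw1
    have hw0 : 0 < ‖w‖ := norm_pos_iff.mpr hw
    have hs : 0 < ‖w‖ ^ 2 := by positivity
    have hx0 : Real.log (‖w‖ ^ 2) ≠ 0 := by
      refine (Real.log_neg hs ?_).ne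
      nlinarith
    have ht1 : (‖w‖ ^ 2) ^ k ≠ 1 := by
      refine (pow_lt_one₀ hs.le ?_ (by omega)).ne
      nlinarith
    have hexp : Real.exp (k * Real.log (‖w‖ ^ 2)) = (‖w‖ ^ 2) ^ k := by
      rw [Real.exp_nat_mul, Real.exp_log hs]
    simp only [pow_mul, u, if_neg ht1, PP]
    rw [hexp, Real.log_pow, Real.exp_neg, Real.exp_log hs]
    generalize Real.log (‖w‖ ^ 2) = x at *
    generalize ‖w‖ ^ 2 = s at *
    obtain ⟨m, rfl⟩ : ∃ m, k = m + 1 := ⟨k - 1, by omega⟩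
    simp only [Nat.add_sub_cancel]
    have := hk0.ne'
    generalize ((m + 1 : ℕ) : ℝ) = κ at *
    rw [pow_succ]
    have : s ^ m ≠ 0 := by positivity
    field_simp
    ring
  · intro x hxn
    have hx0 := hxn.ne
    refine ((hE x).mul ((hP x).div (hx 2 x) (by positivity))).congr_deriv ?_
    simp
    field_simp
    ring
  · intro x hxn
    have hx0 := hxn.ne
    refine ((hE x).mul (((((hP1 x).const_mul (k : ℝ)).sub (hP x)).div (hx 2 x) (by positivity)).sub
      (((hP x).const_mul 2).div (hx 3 x) (by positivity)))).congr_deriv ?_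
    simp
    field_simp
    ring
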